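/- Let i, j : Fin n and let vᵢ, vⱼ, vᵢ', vⱼ' ∈ EuclideanSpace ℝ (Fin k) satisfy ⟪vᵢ, vᵢ'⟫ = PMI i i, ⟪vⱼ, vⱼ'⟫ = PMI j j, ⟪vᵢ, vⱼ'⟫ = PMI i j, and ⟪vⱼ, vᵢ'⟫ = PMI j i. Assume q i j = q j i. Then Real.exp (-(⟪vᵢ - vⱼ, vᵢ' - vⱼ'⟫ / 2)) = q i j / Real.sqrt (q i i * q j j). -/

import Mathlib

open scoped RealInnerProductSpace

/-- Pointwise mutual information of the words `a` and `b`, for marginal weights `p` and joint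
weights `q`. The weights are not required to be normalized; the value is meaningful when they are
positive. -/
noncomputable def pmi {ι : Type*} (p : ι → ℝ) (q : ι → ι → ℝ) (a b : ι) : ℝ :=
  Real.log (q a b / (p a * p b))

section PMI

variable {ι : Type*} {p : ι → ℝ} {q : ι → ι → ℝ}

lemma pmi_eq_log_sub_log_add_log {a b : ι} (hpa : p a ≠ 0) (hpb : p b ≠ 0) (hqab : q a b ≠ 0) :
    pmi p q a b = Real.log (q a b) - (Real.log (p a) + Real.log (p b)) := by
  rw [pmi, Real.log_div hqab (mul_ne_zero hpa hpb), Real.log_mul hpa hpb]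

lemma pmi_add_pmi_sub_pmi_add_pmi (hp : ∀ a, p a ≠ 0) (hq : ∀ a b, q a b ≠ 0) (a b c d : ι) :
    pmi p q a d + pmi p q b c - (pmi p q a c + pmi p q b d) =
      Real.log (q a d * q b c / (q a c * q b d)) := by
  have pmi_eq (x y : ι) := pmi_eq_log_sub_log_add_log (hp x) (hp y) (hq x y)
  rw [Real.log_div (mul_ne_zero (hq a d) (hq b c)) (mul_ne_zero (hq a c) (hq b d)),
    Real.log_mul (hq a d) (hq b c), Real.log_mul (hq a c) (hq b d),
    pmi_eq, pmi_eq, pmi_eq, pmi_eq]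
  ring

theorem quasi_spherical_joint_general {V W : Type*} [AddCommGroup V] [Module ℝ V]
    [AddCommGroup W] [Module ℝ W] (B : V →ₗ[ℝ] W →ₗ[ℝ] ℝ)
    (hp : ∀ a, 0 < p a) (hq : ∀ a b, 0 < q a b) {i j : ι} {vi vj : V} {vi' vj' : W}
    (hii : B vi vi' = pmi p q i i) (hjj : B vj vj' = pmi p q j j)
    (hij : B vi vj' = pmi p q i j) (hji : B vj vi' = pmi p q j i) :
    Real.exp (-(B (vi - vj) (vi' - vj') / 2)) =
      Real.sqrt (q i j * q j i) / Real.sqrt (q i i * q j j) := by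
  have cross_pos : 0 < q i j * q j i := mul_pos (hq i j) (hq j i)
  have diag_pos : 0 < q i i * q j j := mul_pos (hq i i) (hq j j)
  have neg_pairing : -B (vi - vj) (vi' - vj') =
      Real.log (q i j * q j i / (q i i * q j j)) := by
    rw [← pmi_add_pmi_sub_pmi_add_pmi (fun a ↦ (hp a).ne') (fun a b ↦ (hq a b).ne'),
      ← hii, ← hjj, ← hij, ← hji]
    simp only [map_sub, LinearMap.sub_apply]
    ring
  rw [← neg_div, neg_pairing, Real.exp_half, Real.exp_log (div_pos cross_pos diag_pos),
    Real.sqrt_div cross_pos.le]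

end PMI

/-- Exponential (quasi-spherical) form of the second equation of Corollary 1,
stated in the paper's equation (10). -/
theorem quasi_spherical_joint (n k : ℕ) (hn : 0 < n) (hk : 0 < k)
    (p : Fin n → ℝ) (q : Fin n → Fin n → ℝ)
    (hp : ∀ i, 0 < p i) (hq : ∀ i j, 0 < q i j)
    (i j : Fin n)
    (vi vj vi' vj' : EuclideanSpace ℝ (Fin k))
    (hii : ⟪vi, vi'⟫ = Real.log (q i i / (p i * p i)))
    (hjj : ⟪vj, vj'⟫ = Real.log (q j j / (p j * p j)))
    (hij : ⟪vi, vj'⟫ = Real.log (q i j / (p i * p j)))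
    (hji : ⟪vj, vi'⟫ = Real.log (q j i / (p j * p i)))
    (hsym : q i j = q j i) :
    Real.exp (-(⟪vi - vj, vi' - vj'⟫ / 2)) = q i j / Real.sqrt (q i i * q j j) := by
  rw [← innerₗ_apply_apply, quasi_spherical_joint_general (innerₗ _) hp hq hii hjj hij hji,
    ← hsym, Real.sqrt_mul_self (hq i j).le]
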